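/- arXiv:2402.18719 — 4 statements merged into one kernel-verified Lean document; each statement's English description precedes it below -/
import Mathlib

section
/- Propagation along a time-respecting path: under the max-consensus-with-drops dynamics, suppose there are nodes v_0, v_1, …, v_p with (v_s, v_{s-1}) ∈ E for each s = 1,…,p, and time steps k ≤ k_1 < k_2 < ⋯ < k_p such that w_{k_s}(v_s, v_{s-1}) = true for each s. Then x_{k_p + 1}(v_p) ≥ x_k(v_0). -/
/-- Propagation along a time-respecting path: under the
max-consensus-with-drops dynamics, suppose there are nodes `v 0, v 1, …, v p`
(with `p ≥ 1`) such that `(v s, v (s-1)) ∈ E` for each `s = 1, …, p`, and time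
steps `k ≤ k₁ < k₂ < ⋯ < k_p` (given by `t : ℕ → ℕ`) such that the transmission
along `(v s, v (s-1))` at time `t s` is successful for each `s`.
Then `x (t p + 1) (v p) ≥ x k (v 0)`. -/
theorem maxCUCL_time_respecting_path_propagation
    {V : Type*} [Fintype V] [Nonempty V] [DecidableEq V]
    (E : V → V → Prop) [DecidableRel E]
    (w : ℕ → V → V → Bool) (x : ℕ → V → ℝ)
    (hx : ∀ k j, x (k + 1) j =
      ((insert j (Finset.univ.filter fun i => E j i ∧ w k j i = true)).sup'
        (Finset.insert_nonempty _ _) fun i => x k i))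
    (p : ℕ) (hp : 1 ≤ p) (v : ℕ → V) (t : ℕ → ℕ) (k : ℕ)
    (hE : ∀ s, 1 ≤ s → s ≤ p → E (v s) (v (s - 1)))
    (hk : k ≤ t 1)
    (ht : ∀ s, 1 ≤ s → s < p → t s < t (s + 1))
    (hw : ∀ s, 1 ≤ s → s ≤ p → w (t s) (v s) (v (s - 1)) = true) :
    x k (v 0) ≤ x (t p + 1) (v p) := by
  have hmono : ∀ j, Monotone fun n => x n j := by
    intro j
    refine monotone_nat_of_le_succ fun n => ?_
    simp only [hx n j]
    exact Finset.le_sup' (fun i => x n i) (Finset.mem_insert_self _ _)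
  have hstep : ∀ s, 1 ≤ s → s ≤ p → x (t s) (v (s - 1)) ≤ x (t s + 1) (v s) := by
    intro s h1 h2
    rw [hx (t s) (v s)]
    refine Finset.le_sup' (fun i => x (t s) i) (Finset.mem_insert_of_mem ?_)
    exact Finset.mem_filter.mpr ⟨Finset.mem_univ _, hE s h1 h2, hw s h1 h2⟩
  have key : ∀ s, 1 ≤ s → s ≤ p → x k (v 0) ≤ x (t s + 1) (v s) := by
    intro s h1
    induction s, h1 using Nat.le_induction with
    | base =>
      intro h
      exact (hmono (v 0) hk).trans (hstep 1 le_rfl h)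
    | succ s h1 ih =>
      intro h
      have h3 : t s + 1 ≤ t (s + 1) := ht s h1 (by omega)
      exact ((ih (by omega)).trans (hmono (v s) h3)).trans (hstep (s + 1) (by omega) h)
  exact key p hp le_rfl
end

section
/- Windowed convergence (key step in the proof of Proposition 1): suppose D ∈ ℕ is such that for every ordered pair of nodes (i,j) there is a directed path in E from i to j of length at most D, and suppose 0 = t_0 < t_1 < ⋯ < t_D are time steps such that for each s = 0,…,D−1 and each edge (j,i) ∈ E there exists some k with t_s ≤ k < t_{s+1} and w_k(j,i) = true. Then x_{t_D}(j) = q_m for every node j, where q_m = max_{i∈V} x_0(i). -/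
/-- Windowed convergence: suppose `D` is such that every
ordered pair of nodes is joined by a directed path in `E` of length at most `D`,
and `0 = t 0 < t 1 < ⋯ < t D` are time steps such that during each window
`[t s, t (s+1))` every edge has at least one successful transmission.
Then `x (t D) j = q_m` for every node `j`, where `q_m = max_{i ∈ V} x 0 i`. -/
theorem maxCUCL_windowed_convergence
    {V : Type*} [Fintype V] [Nonempty V] [DecidableEq V]
    (E : V → V → Prop) [DecidableRel E]
    (w : ℕ → V → V → Bool) (x : ℕ → V → ℝ)
    (hx : ∀ k j, x (k + 1) j =
      ((insert j (Finset.univ.filter fun i => E j i ∧ w k j i = true)).sup'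
        (Finset.insert_nonempty _ _) fun i => x k i))
    (D : ℕ)
    (hD : ∀ i j : V, ∃ p ≤ D, ∃ v : ℕ → V, v 0 = i ∧ v p = j ∧
      ∀ s, 1 ≤ s → s ≤ p → E (v s) (v (s - 1)))
    (t : ℕ → ℕ) (ht0 : t 0 = 0)
    (htmono : ∀ s, s < D → t s < t (s + 1))
    (hsucc : ∀ s, s < D → ∀ j i, E j i →
      ∃ k, t s ≤ k ∧ k < t (s + 1) ∧ w k j i = true) :
    ∀ j, x (t D) j = Finset.univ.sup' Finset.univ_nonempty (x 0) := by
  have hmono : ∀ j, Monotone fun k => x k j := by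
    intro j
    refine monotone_nat_of_le_succ fun k => ?_
    rw [hx k j]
    exact Finset.le_sup' (fun i => x k i) (Finset.mem_insert_self _ _)
  have hstep : ∀ k j i, E j i → w k j i = true → x k i ≤ x (k + 1) j := by
    intro k j i he hw
    rw [hx k j]
    exact Finset.le_sup' (fun i => x k i) (by simp [he, hw])
  have hub : ∀ k j, x k j ≤ Finset.univ.sup' Finset.univ_nonempty (x 0) := by
    intro k
    induction k with
    | zero => intro j; exact Finset.le_sup' (x 0) (Finset.mem_univ j)
    | succ k ih =>
      intro j
      rw [hx k j]
      exact Finset.sup'_le _ _ fun i _ => ih i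
  have htD : ∀ p q, p ≤ q → q ≤ D → t p ≤ t q := by
    intro p q hpq
    induction q, hpq using Nat.le_induction with
    | base => intro _; exact le_rfl
    | succ q hq ih =>
      intro h
      exact (ih (by omega)).trans (htmono q (by omega)).le
  intro j
  apply le_antisymm (hub _ _)
  obtain ⟨i, -, hi⟩ := Finset.exists_mem_eq_sup' Finset.univ_nonempty (x 0)
  rw [hi]
  obtain ⟨p, hp, v, hv0, hvp, hv⟩ := hD i j
  have key : ∀ s, s ≤ p → x 0 i ≤ x (t s) (v s) := by
    intro s
    induction s with
    | zero => intro _; rw [ht0, hv0]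
    | succ s ih =>
      intro hs
      have he : E (v (s + 1)) (v s) := by simpa using hv (s + 1) (by omega) hs
      obtain ⟨k, hk1, hk2, hk⟩ := hsucc s (by omega) _ _ he
      exact (ih (by omega)).trans ((hmono (v s) hk1).trans
        ((hstep k _ _ he hk).trans (hmono (v (s + 1)) hk2)))
  have h := key p le_rfl
  rw [hvp] at h
  exact h.trans (hmono j (htD p D hp le_rfl))
end

section
/- Soundness of the MaxCUCL termination criterion (Part 3 of Theorem 1): suppose the edge relation E is strongly connected, and suppose there is a time window [k_0, k_0 + L) with L ≥ 1 such that (i) for every edge (j,i) ∈ E there exists k with k_0 ≤ k < k_0 + L and w_k(j,i) = true, and (ii) no node's state changes during the window, i.e., x_k(j) = x_{k_0}(j) for all k_0 ≤ k ≤ k_0 + L and all j ∈ V. Then x_{k_0}(j) = q_m for every node j, where q_m = max_{i∈V} x_0(i). -/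
/-- Soundness of the MaxCUCL termination criterion: if `E` is
strongly connected and there is a time window `[k₀, k₀ + L)` with `L ≥ 1` during
which every edge has at least one successful transmission and no node's state
changes, then every node's state at time `k₀` equals `q_m = max_{i ∈ V} x 0 i`. -/
theorem maxCUCL_termination_criterion_sound
    {V : Type*} [Fintype V] [Nonempty V] [DecidableEq V]
    (E : V → V → Prop) [DecidableRel E]
    (w : ℕ → V → V → Bool) (x : ℕ → V → ℝ)
    (hx : ∀ k j, x (k + 1) j =
      ((insert j (Finset.univ.filter fun i => E j i ∧ w k j i = true)).sup'
        (Finset.insert_nonempty _ _) fun i => x k i))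
    (hconn : ∀ i j : V, i ≠ j → ∃ p, ∃ v : ℕ → V, v 0 = i ∧ v p = j ∧
      ∀ s, 1 ≤ s → s ≤ p → E (v s) (v (s - 1)))
    (k₀ L : ℕ) (hL : 1 ≤ L)
    (hsucc : ∀ j i, E j i → ∃ k, k₀ ≤ k ∧ k < k₀ + L ∧ w k j i = true)
    (hconst : ∀ k, k₀ ≤ k → k ≤ k₀ + L → ∀ j, x k j = x k₀ j) :
    ∀ j, x k₀ j = Finset.univ.sup' Finset.univ_nonempty (x 0) := by
  have hge : ∀ k j i, (i = j ∨ (E j i ∧ w k j i = true)) → x k i ≤ x (k + 1) j := by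
    intro k j i h
    rw [hx]
    refine Finset.le_sup' (fun i => x k i) ?_
    simpa using h
  have hub : ∀ k j, x k j ≤ Finset.univ.sup' Finset.univ_nonempty (x 0) := by
    intro k
    induction k with
    | zero => exact fun j => Finset.le_sup' (x 0) (Finset.mem_univ j)
    | succ k ih =>
      intro j
      rw [hx]
      exact Finset.sup'_le _ _ fun i _ => ih i
  have hmono : ∀ k j, x 0 j ≤ x k j := by
    intro k
    induction k with
    | zero => exact fun j => le_rfl
    | succ k ih => exact fun j => (ih j).trans (hge k j j (Or.inl rfl))
  have hedge : ∀ j i, E j i → x k₀ i ≤ x k₀ j := by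
    intro j i h
    obtain ⟨k, h1, h2, h3⟩ := hsucc j i h
    have h4 := hge k j i (Or.inr ⟨h, h3⟩)
    rwa [hconst k h1 (by omega), hconst (k + 1) (by omega) (by omega)] at h4
  have hall : ∀ i j, x k₀ i ≤ x k₀ j := by
    intro i j
    by_cases hij : i = j
    · rw [hij]
    obtain ⟨p, v, h0, hp, hv⟩ := hconn i j hij
    have key : ∀ s, s ≤ p → x k₀ i ≤ x k₀ (v s) := by
      intro s
      induction s with
      | zero => intro _; rw [h0]
      | succ s ih =>
        intro hs
        exact (ih (by omega)).trans (hedge _ _ (by simpa using hv (s + 1) (by omega) hs))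
    simpa [hp] using key p le_rfl
  intro j
  refine le_antisymm (hub k₀ j) ?_
  exact Finset.sup'_le _ _ fun i _ => (hmono k₀ i).trans (hall i j)
end

section
/- Deterministic finite-time convergence (core of Theorem 1): suppose the edge relation E is strongly connected and the drop pattern w is such that every edge has infinitely many successful transmissions, i.e., for every (j,i) ∈ E and every K ∈ ℕ there exists k ≥ K with w_k(j,i) = true. Then there exists a time step k_0 ∈ ℕ such that for every k ≥ k_0 and every node j, x_k(j) = q_m, where q_m = max_{i∈V} x_0(i). -/
/-- Deterministic finite-time convergence: if `E` is strongly
connected and every edge has infinitely many successful transmissions under `w`,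
then there exists a time step `k₀` such that for every `k ≥ k₀` and every node
`j`, `x k j = q_m`, where `q_m = max_{i ∈ V} x 0 i`. -/
theorem maxCUCL_deterministic_finite_time_convergence
    {V : Type*} [Fintype V] [Nonempty V] [DecidableEq V]
    (E : V → V → Prop) [DecidableRel E]
    (w : ℕ → V → V → Bool) (x : ℕ → V → ℝ)
    (hx : ∀ k j, x (k + 1) j =
      ((insert j (Finset.univ.filter fun i => E j i ∧ w k j i = true)).sup'
        (Finset.insert_nonempty _ _) fun i => x k i))
    (hconn : ∀ i j : V, i ≠ j → ∃ p, ∃ v : ℕ → V, v 0 = i ∧ v p = j ∧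
      ∀ s, 1 ≤ s → s ≤ p → E (v s) (v (s - 1)))
    (hinf : ∀ j i, E j i → ∀ K : ℕ, ∃ k, K ≤ k ∧ w k j i = true) :
    ∃ k₀ : ℕ, ∀ k, k₀ ≤ k → ∀ j,
      x k j = Finset.univ.sup' Finset.univ_nonempty (x 0) := by
  set q := Finset.univ.sup' Finset.univ_nonempty (x 0) with hq
  have hmono1 : ∀ k j, x k j ≤ x (k + 1) j := by
    intro k j
    rw [hx]
    exact Finset.le_sup' (fun i => x k i) (Finset.mem_insert_self _ _)
  have hmono : ∀ j, Monotone fun k => x k j := fun j =>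
    monotone_nat_of_le_succ fun k => hmono1 k j
  have hle : ∀ k j, x k j ≤ q := by
    intro k
    induction k with
    | zero => intro j; exact Finset.le_sup' (x 0) (Finset.mem_univ j)
    | succ k ih =>
      intro j
      rw [hx]
      exact Finset.sup'_le _ _ fun i _ => ih i
  have hstep : ∀ j i, E j i → (∃ k, q ≤ x k i) → ∃ k, q ≤ x k j := by
    rintro j i hE ⟨K, hK⟩
    obtain ⟨k, hk, hw⟩ := hinf j i hE K
    refine ⟨k + 1, (hK.trans (hmono i hk)).trans ?_⟩
    rw [hx]
    exact Finset.le_sup' (fun i => x k i) (by simp [hE, hw])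
  obtain ⟨m, -, hm⟩ := Finset.exists_mem_eq_sup' Finset.univ_nonempty (x 0)
  have hall : ∀ j, ∃ k, q ≤ x k j := by
    intro j
    by_cases hmj : m = j
    · subst hmj
      exact ⟨0, hm.le⟩
    · obtain ⟨p, v, h0, hp, hv⟩ := hconn m j hmj
      have key : ∀ s, s ≤ p → ∃ k, q ≤ x k (v s) := by
        intro s
        induction s with
        | zero => intro _; exact ⟨0, by rw [h0]; exact hm.le⟩
        | succ s ih =>
          intro hs
          exact hstep _ _ (hv (s + 1) (by omega) hs) (ih (by omega))
      rw [← hp]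
      exact key p le_rfl
  choose f hf using hall
  refine ⟨Finset.univ.sup f, fun k hk j => le_antisymm (hle k j) ?_⟩
  exact (hf j).trans (hmono j ((Finset.le_sup (Finset.mem_univ j)).trans hk))
end
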